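/- Let n, S ≥ 1 be integers with S ≥ 1, let K ≥ 2 be an integer, let ε > 0 and β > 0 be reals, and let ŵ^1, …, ŵ^S ∈ ℝ^n be samples. Set M := max{S, β}, and for each coordinate j define w̄ᵃ_j := max_{1≤s≤S} ŵ^s_j + εM and w̲ᵃ_j := min_{1≤s≤S} ŵ^s_j − εM. Then there exist α^s_k ≥ 0 with ∑_{k=1}^K α^s_k = 1 for every s ∈ {1,…,S} and d^s_k ∈ ℝ^n with (1/S) ∑_{s=1}^S ∑_{k=1}^K α^s_k ‖d^s_k‖₁ ≤ ε such that (1/S) ∑ { α^s_k : the point ŵ^s + d^s_k has some coordinate j with (ŵ^s + d^s_k)_j ≥ w̄ᵃ_j or (ŵ^s + d^s_k)_j ≤ w̲ᵃ_j } = 1/M. (The construction moves, for some coordinate j and a sample attaining max_s ŵ^s_j, a mass piece of size min{1, S/β} along coordinate j by a distance of ε·max{S, β}.) -/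

import Mathlib

/-!
Pick a coordinate `j₀` and a sample `s₀` attaining `⨆ s, what s j₀`. Its distance to the face
`ub j₀` of the box is exactly `ε * M`. Sample `s₀` is split into a piece of mass `S / M ≤ 1`, moved
by `ε * M` along coordinate `j₀`, and a piece of mass `1 - S / M` that stays; all other samples stay.
The averaged cost is `(1 / S) * (S / M) * (ε * M) = ε`, and the averaged mass outside the open box is
`(1 / S) * (S / M) = 1 / M`, since every unmoved sample lies strictly inside the box.
-/

/- **Statement 3**: the achievability direction of the discrete-transport computation
in the proof of Theorem 1: the bound `1 / max {S, β}` on the mass placed outside the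
open box `∏_j (lb j, ub j)` under transport budget `ε` is attained. -/
open Classical in
theorem stmt3
    (n S : ℕ) (hn : 1 ≤ n) (hS : 1 ≤ S)
    (K : ℕ) (hK : 2 ≤ K)
    (ε β : ℝ) (hε : 0 < ε) (hβ : 0 < β)
    (what : Fin S → Fin n → ℝ)
    (M : ℝ) (hM : M = max (S : ℝ) β)
    (ub lb : Fin n → ℝ)
    (hub : ∀ j, ub j = (⨆ s, what s j) + ε * M)
    (hlb : ∀ j, lb j = (⨅ s, what s j) - ε * M) :
    ∃ (α : Fin S → Fin K → ℝ) (d : Fin S → Fin K → Fin n → ℝ),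
      (∀ s k, 0 ≤ α s k) ∧
      (∀ s, ∑ k, α s k = 1) ∧
      (1 / (S : ℝ)) * ∑ s, ∑ k, α s k * (∑ j, |d s k j|) ≤ ε ∧
      (1 / (S : ℝ)) * ∑ s, ∑ k,
          (if ∃ j, ub j ≤ what s j + d s k j ∨ what s j + d s k j ≤ lb j
           then α s k else 0) = 1 / M := by
  have hSpos : (0 : ℝ) < S := by exact_mod_cast hS
  have hMS : (S : ℝ) ≤ M := hM ▸ le_max_left _ _
  have hMpos : 0 < M := hSpos.trans_le hMS
  have hεM : 0 < ε * M := mul_pos hε hMpos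
  have hp0 : 0 ≤ (S : ℝ) / M := by positivity
  have hp1 : (S : ℝ) / M ≤ 1 := (div_le_one hMpos).2 hMS
  haveI : Nonempty (Fin S) := ⟨⟨0, hS⟩⟩
  let j₀ : Fin n := ⟨0, hn⟩
  let k₀ : Fin K := ⟨0, by omega⟩
  let k₁ : Fin K := ⟨1, by omega⟩
  have hk : k₁ ≠ k₀ := by simp [k₀, k₁]
  obtain ⟨s₀, hs₀⟩ := exists_eq_ciSup_of_finite (f := fun s => what s j₀)
  have hin : ∀ s j, lb j < what s j ∧ what s j < ub j := by
    intro s j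
    have h1 : what s j ≤ ⨆ s, what s j :=
      le_ciSup (f := fun s => what s j) (Set.finite_range _).bddAbove s
    have h2 : ⨅ s, what s j ≤ what s j :=
      ciInf_le (f := fun s => what s j) (Set.finite_range _).bddBelow s
    rw [hub, hlb]
    constructor <;> linarith
  -- The piece `k₀` of each sample carries the moved mass `q s`, the piece `k₁` the remainder.
  let q : Fin S → ℝ := fun s => if s = s₀ then (S : ℝ) / M else 0
  have hq0 : ∀ s, 0 ≤ q s := fun s => by dsimp only [q]; split_ifs <;> simp [hp0]
  have hq1 : ∀ s, q s ≤ 1 := fun s => by dsimp only [q]; split_ifs <;> simp [hp1]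
  let α : Fin S → Fin K → ℝ := fun s k =>
    (if k = k₀ then q s else 0) + (if k = k₁ then 1 - q s else 0)
  let d : Fin S → Fin K → Fin n → ℝ := fun s k j =>
    if j = j₀ then (if s = s₀ ∧ k = k₀ then ε * M else 0) else 0
  have hα₀ : α s₀ k₀ = S / M := by simp [α, q, hk.symm]
  have hd : ∀ s k, ∑ j, |d s k j| = if s = s₀ ∧ k = k₀ then ε * M else 0 := by
    intro s k
    rw [Finset.sum_eq_single j₀]
    · simp only [d, if_true]
      split_ifs <;> simp [abs_of_pos hε, abs_of_pos hMpos]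
    · intro j _ hj
      simp [d, hj]
    · simp
  have hout : ∀ s k, (∃ j, ub j ≤ what s j + d s k j ∨ what s j + d s k j ≤ lb j) ↔
      s = s₀ ∧ k = k₀ := by
    intro s k
    constructor
    · rintro ⟨j, hj⟩
      by_contra hne
      have hz : d s k j = 0 := by simp [d, hne]
      rw [hz, add_zero] at hj
      exact hj.elim (not_le.2 (hin s j).2) (not_le.2 (hin s j).1)
    · rintro ⟨rfl, rfl⟩
      refine ⟨j₀, Or.inl ?_⟩
      rw [hub, ← hs₀]
      simp [d]
  have hsum : ∀ c : ℝ, ∑ s, ∑ k, (if s = s₀ ∧ k = k₀ then α s k * c else 0) = S / M * c := by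
    intro c
    rw [Finset.sum_eq_single s₀, Finset.sum_eq_single k₀]
    · simp [hα₀]
    · intro k _ h
      simp [h]
    · simp
    · intro s _ h
      simp [h]
    · simp
  refine ⟨α, d, ?_, ?_, ?_, ?_⟩
  · intro s k
    have h1 := sub_nonneg.2 (hq1 s)
    have h0 := hq0 s
    dsimp only [α]
    split_ifs <;> linarith
  · intro s
    simp [α, Finset.sum_add_distrib]
  · have h := hsum (ε * M)
    simp only [hd, mul_ite, mul_zero]
    rw [h]
    apply le_of_eq
    field_simp
  · have h := hsum 1
    simp only [mul_one] at h
    simp only [hout]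
    rw [h]
    field_simp
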